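/- arXiv:1801.05722 — 4 statements merged into one kernel-verified Lean document; each statement's English description precedes it below -/
import Mathlib

section
/- Let the notation be as in the context. Then a vector (x,y) in F^{a0+ainf} (x in F^{a0}, y in F^{ainf}) lies in ker(f0) ∩ ker(fbar0) if and only if x = 0 and B1·y = 0; a vector (x,y) in F^{a1+a0} lies in ker(f1) ∩ ker(fbar1) if and only if x = 0 and Binf·y = 0; and a vector (x,y) in F^{ainf+a1} lies in ker(finf) ∩ ker(fbarinf) if and only if x = 0 and B0·y = 0. Consequently dim(ker f0 ∩ ker fbar0) = ainf − r1, dim(ker f1 ∩ ker fbar1) = a0 − rinf, and dim(ker finf ∩ ker fbarinf) = a1 − r0. -/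
set_option maxHeartbeats 1600000

open Matrix Module
open scoped Kronecker

abbrev F2 : Type := ZMod 2

/-- A splicing datum: the algebraic data extracted from the knot Floer homology of a knot
in a homology sphere, as in Eftekhary's splicing formula. -/
structure SplicingDatum where
  a0 : ℕ
  a1 : ℕ
  ainf : ℕ
  A0 : Matrix (Fin ainf) (Fin ainf) F2
  B0 : Matrix (Fin ainf) (Fin a1) F2
  C0 : Matrix (Fin a1) (Fin ainf) F2
  D0 : Matrix (Fin a1) (Fin a1) F2
  A1 : Matrix (Fin a0) (Fin a0) F2
  B1 : Matrix (Fin a0) (Fin ainf) F2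
  C1 : Matrix (Fin ainf) (Fin a0) F2
  D1 : Matrix (Fin ainf) (Fin ainf) F2
  Ainf : Matrix (Fin a1) (Fin a1) F2
  Binf : Matrix (Fin a1) (Fin a0) F2
  Cinf : Matrix (Fin a0) (Fin a1) F2
  Dinf : Matrix (Fin a0) (Fin a0) F2
  C0inv : Matrix (Fin a1) (Fin ainf) F2
  C1inv : Matrix (Fin ainf) (Fin a0) F2
  Cinfinv : Matrix (Fin a0) (Fin a1) F2
  inv0_left : Matrix.fromBlocks A0 B0 C0 D0 * Matrix.fromBlocks A0 B0 C0inv D0 = 1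
  inv0_right : Matrix.fromBlocks A0 B0 C0inv D0 * Matrix.fromBlocks A0 B0 C0 D0 = 1
  inv1_left : Matrix.fromBlocks A1 B1 C1 D1 * Matrix.fromBlocks A1 B1 C1inv D1 = 1
  inv1_right : Matrix.fromBlocks A1 B1 C1inv D1 * Matrix.fromBlocks A1 B1 C1 D1 = 1
  invinf_left : Matrix.fromBlocks Ainf Binf Cinf Dinf * Matrix.fromBlocks Ainf Binf Cinfinv Dinf = 1
  invinf_right : Matrix.fromBlocks Ainf Binf Cinfinv Dinf * Matrix.fromBlocks Ainf Binf Cinf Dinf = 1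
  comm0 : A0 * B0 + B0 * D0 = 0
  comm1 : A1 * B1 + B1 * D1 = 0
  comminf : Ainf * Binf + Binf * Dinf = 0
  sq0 : B1 * B0 * Binf * (B1 * B0 * Binf) = 0
  sq1 : Binf * B1 * B0 * (Binf * B1 * B0) = 0
  sqinf : B0 * Binf * B1 * (B0 * Binf * B1) = 0

/-- dimension of the kernel of the linear map induced by a matrix -/
noncomputable def kdim {m n : Type*} [Fintype n] (M : Matrix m n F2) : ℕ :=
  finrank F2 ↥(LinearMap.ker M.mulVecLin)

/-- dimension of the cokernel of the linear map induced by a matrix -/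
noncomputable def cdim {m n : Type*} [Fintype n] (M : Matrix m n F2) : ℕ :=
  finrank F2 ((m → F2) ⧸ LinearMap.range M.mulVecLin)

/-- tensor product of two vectors, as a vector indexed by the product type -/
def tensVec {m n : Type*} (x : m → F2) (y : n → F2) : m × n → F2 :=
  fun p => x p.1 * y p.2

namespace SplicingDatum

variable (d : SplicingDatum)

def X0M : Matrix (Fin d.a0) (Fin d.a0) F2 := d.B1 * d.B0 * d.Binf
def X1M : Matrix (Fin d.a1) (Fin d.a1) F2 := d.Binf * d.B1 * d.B0
def XinfM : Matrix (Fin d.ainf) (Fin d.ainf) F2 := d.B0 * d.Binf * d.B1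

def tau0 : Matrix (Fin d.ainf ⊕ Fin d.a1) (Fin d.ainf ⊕ Fin d.a1) F2 :=
  Matrix.fromBlocks d.A0 d.B0 d.C0 d.D0
def tau0inv : Matrix (Fin d.ainf ⊕ Fin d.a1) (Fin d.ainf ⊕ Fin d.a1) F2 :=
  Matrix.fromBlocks d.A0 d.B0 d.C0inv d.D0
def tau1 : Matrix (Fin d.a0 ⊕ Fin d.ainf) (Fin d.a0 ⊕ Fin d.ainf) F2 :=
  Matrix.fromBlocks d.A1 d.B1 d.C1 d.D1
def tau1inv : Matrix (Fin d.a0 ⊕ Fin d.ainf) (Fin d.a0 ⊕ Fin d.ainf) F2 :=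
  Matrix.fromBlocks d.A1 d.B1 d.C1inv d.D1
def tauinf : Matrix (Fin d.a1 ⊕ Fin d.a0) (Fin d.a1 ⊕ Fin d.a0) F2 :=
  Matrix.fromBlocks d.Ainf d.Binf d.Cinf d.Dinf
def tauinfinv : Matrix (Fin d.a1 ⊕ Fin d.a0) (Fin d.a1 ⊕ Fin d.a0) F2 :=
  Matrix.fromBlocks d.Ainf d.Binf d.Cinfinv d.Dinf

/-- the map `finf : F^{ainf+a1} → F^{a0+ainf}` -/
def finfM : Matrix (Fin d.a0 ⊕ Fin d.ainf) (Fin d.ainf ⊕ Fin d.a1) F2 :=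
  Matrix.fromBlocks 0 0 (1 : Matrix (Fin d.ainf) (Fin d.ainf) F2) 0
/-- the map `f0 : F^{a0+ainf} → F^{a1+a0}` -/
def f0M : Matrix (Fin d.a1 ⊕ Fin d.a0) (Fin d.a0 ⊕ Fin d.ainf) F2 :=
  Matrix.fromBlocks 0 0 (1 : Matrix (Fin d.a0) (Fin d.a0) F2) 0
/-- the map `f1 : F^{a1+a0} → F^{ainf+a1}` -/
def f1M : Matrix (Fin d.ainf ⊕ Fin d.a1) (Fin d.a1 ⊕ Fin d.a0) F2 :=
  Matrix.fromBlocks 0 0 (1 : Matrix (Fin d.a1) (Fin d.a1) F2) 0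

def fbarinfM : Matrix (Fin d.a0 ⊕ Fin d.ainf) (Fin d.ainf ⊕ Fin d.a1) F2 :=
  d.tau1inv * d.finfM * d.tau0
def fbar0M : Matrix (Fin d.a1 ⊕ Fin d.a0) (Fin d.a0 ⊕ Fin d.ainf) F2 :=
  d.tauinfinv * d.f0M * d.tau1
def fbar1M : Matrix (Fin d.ainf ⊕ Fin d.a1) (Fin d.a1 ⊕ Fin d.a0) F2 :=
  d.tau0inv * d.f1M * d.tauinf

noncomputable def r0 : ℕ := d.B0.rank
noncomputable def r1 : ℕ := d.B1.rank
noncomputable def rinf : ℕ := d.Binf.rank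

noncomputable def k0 : ℕ :=
  finrank F2 ↥(LinearMap.ker d.f0M.mulVecLin ⊓ LinearMap.ker d.fbar0M.mulVecLin)
noncomputable def k1 : ℕ :=
  finrank F2 ↥(LinearMap.ker d.f1M.mulVecLin ⊓ LinearMap.ker d.fbar1M.mulVecLin)
noncomputable def kinf : ℕ :=
  finrank F2 ↥(LinearMap.ker d.finfM.mulVecLin ⊓ LinearMap.ker d.fbarinfM.mulVecLin)

noncomputable def l0 : ℕ :=
  finrank F2 ↥(LinearMap.ker (d.f0M + d.fbar0M).mulVecLin) - d.k0
noncomputable def l1 : ℕ :=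
  finrank F2 ↥(LinearMap.ker (d.f1M + d.fbar1M).mulVecLin) - d.k1
noncomputable def linf : ℕ :=
  finrank F2 ↥(LinearMap.ker (d.finfM + d.fbarinfM).mulVecLin) - d.kinf

noncomputable def c0 : ℕ :=
  finrank F2 ((Fin d.a1 ⊕ Fin d.a0 → F2) ⧸
    (LinearMap.range d.f0M.mulVecLin ⊔ LinearMap.range d.fbar0M.mulVecLin))
noncomputable def c1 : ℕ :=
  finrank F2 ((Fin d.ainf ⊕ Fin d.a1 → F2) ⧸
    (LinearMap.range d.f1M.mulVecLin ⊔ LinearMap.range d.fbar1M.mulVecLin))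
noncomputable def cinf : ℕ :=
  finrank F2 ((Fin d.a0 ⊕ Fin d.ainf → F2) ⧸
    (LinearMap.range d.finfM.mulVecLin ⊔ LinearMap.range d.fbarinfM.mulVecLin))

noncomputable def dd0 : ℕ :=
  finrank F2 ↥(LinearMap.range d.f0M.mulVecLin ⊔ LinearMap.range d.fbar0M.mulVecLin) -
    finrank F2 ↥(LinearMap.range (d.f0M + d.fbar0M).mulVecLin)
noncomputable def dd1 : ℕ :=
  finrank F2 ↥(LinearMap.range d.f1M.mulVecLin ⊔ LinearMap.range d.fbar1M.mulVecLin) -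
    finrank F2 ↥(LinearMap.range (d.f1M + d.fbar1M).mulVecLin)
noncomputable def ddinf : ℕ :=
  finrank F2 ↥(LinearMap.range d.finfM.mulVecLin ⊔ LinearMap.range d.fbarinfM.mulVecLin) -
    finrank F2 ↥(LinearMap.range (d.finfM + d.fbarinfM).mulVecLin)

noncomputable def delta0 : ℕ := d.a0 - d.rinf - d.l0
noncomputable def delta1 : ℕ := d.a1 - d.r0 - d.l1
noncomputable def deltainf : ℕ := d.ainf - d.r1 - d.linf

end SplicingDatum

theorem helper_iff {p q s : Type} [Fintype p] [Fintype q] [Fintype s]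
    [DecidableEq p] [DecidableEq q] [DecidableEq s]
    (A : Matrix p p F2) (B : Matrix p q F2) (C : Matrix q p F2) (D : Matrix q q F2)
    (S S' : Matrix (s ⊕ p) (s ⊕ p) F2) (h : S' * S = 1)
    (f : Matrix (s ⊕ p) (p ⊕ q) F2) (hf : f = Matrix.fromBlocks 0 0 1 0)
    (T : Matrix (p ⊕ q) (p ⊕ q) F2) (hT : T = Matrix.fromBlocks A B C D) (x : p → F2) (y : q → F2) :
    (f.mulVec (Sum.elim x y) = 0 ∧ (S * f * T).mulVec (Sum.elim x y) = 0) ↔ (x = 0 ∧ B.mulVec y = 0) := by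
  have key : ∀ (u : p → F2) (v : q → F2),
      f.mulVec (Sum.elim u v) = 0
        ↔ u = 0 := by
    intro u v
    rw [hf, Matrix.fromBlocks_mulVec]
    constructor
    · intro h
      funext i
      have := congrFun h (Sum.inr i)
      simpa using this
    · rintro rfl
      funext i
      cases i <;> simp
  have inj : ∀ w : s ⊕ p → F2, S.mulVec w = 0 ↔ w = 0 := by
    intro w
    constructor
    · intro hw
      have := congrArg (S'.mulVec) hw
      simpa [Matrix.mulVec_mulVec, h] using this
    · rintro rfl
      simp
  rw [key, ← Matrix.mulVec_mulVec, ← Matrix.mulVec_mulVec, inj, hT, Matrix.fromBlocks_mulVec, key]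
  constructor
  · rintro ⟨rfl, h2⟩
    refine ⟨rfl, ?_⟩
    simpa using h2
  · rintro ⟨rfl, h2⟩
    refine ⟨rfl, ?_⟩
    simpa using h2

theorem helper_dim {p q t : Type} [Fintype p] [Fintype q] [Fintype t]
    (f g : Matrix t (p ⊕ q) F2) (B : Matrix p q F2)
    (h : ∀ (x : p → F2) (y : q → F2),
      (f.mulVec (Sum.elim x y) = 0 ∧ g.mulVec (Sum.elim x y) = 0) ↔ (x = 0 ∧ B.mulVec y = 0)) :
    finrank F2 ↥(LinearMap.ker f.mulVecLin ⊓ LinearMap.ker g.mulVecLin)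
      = Fintype.card q - B.rank := by
  have e : LinearMap.ker f.mulVecLin ⊓ LinearMap.ker g.mulVecLin
      = (LinearMap.ker B.mulVecLin).map
        ((LinearEquiv.sumArrowLequivProdArrow p q F2 F2).symm.toLinearMap ∘ₗ
          LinearMap.inr F2 (p → F2) (q → F2)) := by
    ext w
    have hw : w = Sum.elim (w ∘ Sum.inl) (w ∘ Sum.inr) := (Sum.elim_comp_inl_inr w).symm
    have h' := h (w ∘ Sum.inl) (w ∘ Sum.inr)
    rw [← hw] at h'
    have e2 : ∀ v : q → F2, ((LinearEquiv.sumArrowLequivProdArrow p q F2 F2).symm.toLinearMap ∘ₗ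
          LinearMap.inr F2 (p → F2) (q → F2)) v = Sum.elim (0 : p → F2) v := by
      intro v
      funext i
      cases i <;> rfl
    simp only [Submodule.mem_inf, LinearMap.mem_ker, Matrix.mulVecLin_apply, Submodule.mem_map, e2]
    rw [h']
    constructor
    · rintro ⟨h1, h2⟩
      exact ⟨_, h2, by rw [← h1]; exact hw.symm⟩
    · rintro ⟨v, hv, rfl⟩
      exact ⟨by simp, by simpa using hv⟩
  have hi : Function.Injective ((LinearEquiv.sumArrowLequivProdArrow p q F2 F2).symm.toLinearMap ∘ₗ
          LinearMap.inr F2 (p → F2) (q → F2)) := by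
    rw [LinearMap.coe_comp]
    exact (LinearEquiv.injective _).comp LinearMap.inr_injective
  rw [e, ← (Submodule.equivMapOfInjective _ hi (LinearMap.ker B.mulVecLin)).finrank_eq]
  have := LinearMap.finrank_range_add_finrank_ker B.mulVecLin
  rw [Module.finrank_fintype_fun_eq_card] at this
  rw [Matrix.rank]
  omega

/-- description of `ker f• ∩ ker fbar•` and its dimension. -/
theorem stmt0 (d : SplicingDatum) :
    (∀ (x : Fin d.a0 → F2) (y : Fin d.ainf → F2),
      (d.f0M.mulVec (Sum.elim x y) = 0 ∧ d.fbar0M.mulVec (Sum.elim x y) = 0) ↔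
        (x = 0 ∧ d.B1.mulVec y = 0)) ∧
    (∀ (x : Fin d.a1 → F2) (y : Fin d.a0 → F2),
      (d.f1M.mulVec (Sum.elim x y) = 0 ∧ d.fbar1M.mulVec (Sum.elim x y) = 0) ↔
        (x = 0 ∧ d.Binf.mulVec y = 0)) ∧
    (∀ (x : Fin d.ainf → F2) (y : Fin d.a1 → F2),
      (d.finfM.mulVec (Sum.elim x y) = 0 ∧ d.fbarinfM.mulVec (Sum.elim x y) = 0) ↔
        (x = 0 ∧ d.B0.mulVec y = 0)) ∧
    d.k0 = d.ainf - d.r1 ∧ d.k1 = d.a0 - d.rinf ∧ d.kinf = d.a1 - d.r0 := by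
  have h0 := fun x y => helper_iff d.A1 d.B1 d.C1 d.D1 d.tauinfinv d.tauinf d.invinf_left
    d.f0M rfl d.tau1 rfl x y
  have h1 := fun x y => helper_iff d.Ainf d.Binf d.Cinf d.Dinf d.tau0inv d.tau0 d.inv0_left
    d.f1M rfl d.tauinf rfl x y
  have hinf := fun x y => helper_iff d.A0 d.B0 d.C0 d.D0 d.tau1inv d.tau1 d.inv1_left
    d.finfM rfl d.tau0 rfl x y
  refine ⟨h0, h1, hinf, ?_, ?_, ?_⟩
  · have := helper_dim d.f0M d.fbar0M d.B1 h0
    rwa [Fintype.card_fin] at this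
  · have := helper_dim d.f1M d.fbar1M d.Binf h1
    rwa [Fintype.card_fin] at this
  · have := helper_dim d.finfM d.fbarinfM d.B0 hinf
    rwa [Fintype.card_fin] at this
end

section
/- Let the notation be as in the context. Then a row vector (x,y) with x in F^{a0}, y in F^{ainf} annihilates the subspace im(finf) + im(fbarinf) of F^{a0+ainf} if and only if y = 0 and x·B1 = 0; similarly for the other two pairs of maps. Consequently the codimension of im(finf) + im(fbarinf) in F^{a0+ainf} equals a0 − r1, the codimension of im(f0) + im(fbar0) in F^{a1+a0} equals a1 − rinf, and the codimension of im(f1) + im(fbar1) in F^{ainf+a1} equals ainf − r0. -/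
set_option maxHeartbeats 1600000

open Matrix Module
open scoped Kronecker

theorem aux_mem {p q r : ℕ} (A : Matrix (Fin p) (Fin p) F2) (B : Matrix (Fin p) (Fin q) F2)
    (C : Matrix (Fin q) (Fin p) F2) (D : Matrix (Fin q) (Fin q) F2)
    (S S' : Matrix (Fin q ⊕ Fin r) (Fin q ⊕ Fin r) F2) (h : S * S' = 1)
    (w : Fin p ⊕ Fin q → F2) :
    w ∈ LinearMap.range (Matrix.fromBlocks (0 : Matrix (Fin p) (Fin q) F2)
        (0 : Matrix (Fin p) (Fin r) F2) (1 : Matrix (Fin q) (Fin q) F2) 0).mulVecLin ⊔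
      LinearMap.range (Matrix.fromBlocks A B C D * Matrix.fromBlocks (0 : Matrix (Fin p) (Fin q) F2)
        (0 : Matrix (Fin p) (Fin r) F2) (1 : Matrix (Fin q) (Fin q) F2) 0 * S).mulVecLin ↔
    w ∘ Sum.inl ∈ LinearMap.range B.mulVecLin := by
  rw [Submodule.mem_sup]
  constructor
  · rintro ⟨_, ⟨u, rfl⟩, _, ⟨v, rfl⟩, rfl⟩
    refine ⟨(S *ᵥ v) ∘ Sum.inl, ?_⟩
    simp only [Matrix.mulVecLin_apply, ← Matrix.mulVec_mulVec, Matrix.fromBlocks_mulVec]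
    ext i
    simp
  · rintro ⟨u, hu⟩
    refine ⟨_, ⟨Sum.elim (w ∘ Sum.inr - D *ᵥ u) 0, rfl⟩, _, ⟨S' *ᵥ Sum.elim u 0, rfl⟩, ?_⟩
    have e : S *ᵥ (S' *ᵥ Sum.elim u 0) = Sum.elim u 0 := by
      rw [Matrix.mulVec_mulVec, h, Matrix.one_mulVec]
    simp only [Matrix.mulVecLin_apply] at hu
    simp only [Matrix.mulVecLin_apply, ← Matrix.mulVec_mulVec, e]
    simp only [Matrix.fromBlocks_mulVec]
    ext i
    rcases i with i | i
    · simpa using congrFun hu i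
    · simp

theorem aux_ann {p q : ℕ} (B : Matrix (Fin p) (Fin q) F2)
    (W : Submodule F2 (Fin p ⊕ Fin q → F2))
    (hW : ∀ w, w ∈ W ↔ w ∘ Sum.inl ∈ LinearMap.range B.mulVecLin)
    (x : Fin p → F2) (y : Fin q → F2) :
    (∀ w ∈ W, Sum.elim x y ⬝ᵥ w = 0) ↔ (y = 0 ∧ Matrix.vecMul x B = 0) := by
  constructor
  · intro h
    constructor
    · refine dotProduct_eq_zero _ fun v => ?_
      have := h (Sum.elim 0 v) ((hW _).2 ⟨0, by simp⟩)
      simpa [sumElim_dotProduct_sumElim] using this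
    · refine dotProduct_eq_zero _ fun v => ?_
      have := h (Sum.elim (B *ᵥ v) 0) ((hW _).2 ⟨v, by simp⟩)
      rw [← Matrix.dotProduct_mulVec]
      simpa [sumElim_dotProduct_sumElim] using this
  · rintro ⟨rfl, hx⟩ w hw
    obtain ⟨u, hu⟩ := (hW w).1 hw
    have e : w = Sum.elim (w ∘ Sum.inl) (w ∘ Sum.inr) := by simp
    rw [e, ← hu, sumElim_dotProduct_sumElim, Matrix.mulVecLin_apply,
      Matrix.dotProduct_mulVec, hx]
    simp

theorem aux_dim {p q : ℕ} (B : Matrix (Fin p) (Fin q) F2)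
    (W : Submodule F2 (Fin p ⊕ Fin q → F2))
    (hW : ∀ w, w ∈ W ↔ w ∘ Sum.inl ∈ LinearMap.range B.mulVecLin) :
    finrank F2 ((Fin p ⊕ Fin q → F2) ⧸ W) = p - B.rank := by
  let φ : (Fin p ⊕ Fin q → F2) →ₗ[F2] ((Fin p → F2) ⧸ LinearMap.range B.mulVecLin) :=
    (LinearMap.range B.mulVecLin).mkQ ∘ₗ LinearMap.funLeft F2 F2 Sum.inl
  have hs : Function.Surjective φ :=
    (Submodule.mkQ_surjective _).comp
      (LinearMap.funLeft_surjective_of_injective _ _ _ Sum.inl_injective)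
  have hk : W = LinearMap.ker φ := by
    ext w
    rw [hW, LinearMap.mem_ker]
    simp only [φ, LinearMap.comp_apply, Submodule.mkQ_apply, Submodule.Quotient.mk_eq_zero]
    rfl
  rw [hk, (φ.quotKerEquivOfSurjective hs).finrank_eq]
  have := Submodule.finrank_quotient_add_finrank (LinearMap.range B.mulVecLin)
  rw [Module.finrank_fin_fun] at this
  unfold Matrix.rank
  omega

/-- description of the annihilator of `im f• + im fbar•` and the codimensions. -/
theorem stmt1 (d : SplicingDatum) :
    (∀ (x : Fin d.a0 → F2) (y : Fin d.ainf → F2),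
      (∀ w ∈ LinearMap.range d.finfM.mulVecLin ⊔ LinearMap.range d.fbarinfM.mulVecLin,
          Sum.elim x y ⬝ᵥ w = 0) ↔ (y = 0 ∧ Matrix.vecMul x d.B1 = 0)) ∧
    (∀ (x : Fin d.a1 → F2) (y : Fin d.a0 → F2),
      (∀ w ∈ LinearMap.range d.f0M.mulVecLin ⊔ LinearMap.range d.fbar0M.mulVecLin,
          Sum.elim x y ⬝ᵥ w = 0) ↔ (y = 0 ∧ Matrix.vecMul x d.Binf = 0)) ∧
    (∀ (x : Fin d.ainf → F2) (y : Fin d.a1 → F2),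
      (∀ w ∈ LinearMap.range d.f1M.mulVecLin ⊔ LinearMap.range d.fbar1M.mulVecLin,
          Sum.elim x y ⬝ᵥ w = 0) ↔ (y = 0 ∧ Matrix.vecMul x d.B0 = 0)) ∧
    d.cinf = d.a0 - d.r1 ∧ d.c0 = d.a1 - d.rinf ∧ d.c1 = d.ainf - d.r0 := by
  have h1 := aux_mem d.A1 d.B1 d.C1inv d.D1 _ _ d.inv0_left
  have h2 := aux_mem d.Ainf d.Binf d.Cinfinv d.Dinf _ _ d.inv1_left
  have h3 := aux_mem d.A0 d.B0 d.C0inv d.D0 _ _ d.invinf_left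
  exact ⟨aux_ann _ _ h1, aux_ann _ _ h2, aux_ann _ _ h3,
    aux_dim _ _ h1, aux_dim _ _ h2, aux_dim _ _ h3⟩
end

section
/- Let the notation be as in the context. Then, as subspaces of F^{a0+ainf}, one has the equality ker(f0) ∩ ker(fbar0) = im(finf) ∩ im(fbarinf), and this subspace has dimension ainf − r1. -/
set_option maxHeartbeats 1600000

open Matrix Module
open scoped Kronecker

theorem aux_ker_f0 (d : SplicingDatum) (v : Fin d.a0 ⊕ Fin d.ainf → F2) :
    d.f0M *ᵥ v = 0 ↔ v ∘ Sum.inl = 0 := by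
  unfold SplicingDatum.f0M
  rw [Matrix.fromBlocks_mulVec]
  constructor
  · intro h
    funext i
    have := congrFun h (Sum.inr i)
    simpa using this
  · intro h
    rw [h]
    funext i
    cases i <;> simp

theorem aux_range_finf (d : SplicingDatum) (v : Fin d.a0 ⊕ Fin d.ainf → F2) :
    (∃ w, d.finfM *ᵥ w = v) ↔ v ∘ Sum.inl = 0 := by
  unfold SplicingDatum.finfM
  constructor
  · rintro ⟨w, rfl⟩
    rw [Matrix.fromBlocks_mulVec]
    funext i
    simp
  · intro h
    refine ⟨Sum.elim (v ∘ Sum.inr) 0, ?_⟩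
    rw [Matrix.fromBlocks_mulVec]
    funext i
    cases i with
    | inl i => simpa using (congrFun h i).symm
    | inr i => simp

theorem aux_ker_fbar0 (d : SplicingDatum) (v : Fin d.a0 ⊕ Fin d.ainf → F2) :
    d.fbar0M *ᵥ v = 0 ↔ (d.tau1 *ᵥ v) ∘ Sum.inl = 0 := by
  rw [← aux_ker_f0]
  unfold SplicingDatum.fbar0M
  rw [Matrix.mul_assoc, ← Matrix.mulVec_mulVec, ← Matrix.mulVec_mulVec]
  constructor
  · intro h
    have h2 := congrArg (fun z => d.tauinf *ᵥ z) h
    simp only [Matrix.mulVec_mulVec, Matrix.mulVec_zero] at h2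
    rw [← Matrix.mul_assoc, show d.tauinf * d.tauinfinv = 1 from d.invinf_left,
      Matrix.one_mul] at h2
    rw [Matrix.mulVec_mulVec]
    exact h2
  · intro h
    rw [h, Matrix.mulVec_zero]

theorem aux_range_fbarinf (d : SplicingDatum) (v : Fin d.a0 ⊕ Fin d.ainf → F2) :
    (∃ w, d.fbarinfM *ᵥ w = v) ↔ (d.tau1 *ᵥ v) ∘ Sum.inl = 0 := by
  rw [← aux_range_finf]
  unfold SplicingDatum.fbarinfM
  have e1 : d.tau1 * d.tau1inv = 1 := d.inv1_left
  have e2 : d.tau1inv * d.tau1 = 1 := d.inv1_right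
  have e3 : d.tau0 * d.tau0inv = 1 := d.inv0_left
  constructor
  · rintro ⟨w, rfl⟩
    refine ⟨d.tau0 *ᵥ w, ?_⟩
    rw [Matrix.mulVec_mulVec, Matrix.mulVec_mulVec, ← Matrix.mul_assoc, ← Matrix.mul_assoc, e1,
      Matrix.one_mul]
  · rintro ⟨w, hw⟩
    refine ⟨d.tau0inv *ᵥ w, ?_⟩
    rw [Matrix.mulVec_mulVec, Matrix.mul_assoc, e3, Matrix.mul_one, ← Matrix.mulVec_mulVec, hw,
      Matrix.mulVec_mulVec, e2, Matrix.one_mulVec]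

theorem aux_tau1 (d : SplicingDatum) (v : Fin d.a0 ⊕ Fin d.ainf → F2)
    (h : v ∘ Sum.inl = 0) :
    (d.tau1 *ᵥ v) ∘ Sum.inl = d.B1 *ᵥ (v ∘ Sum.inr) := by
  unfold SplicingDatum.tau1
  rw [Matrix.fromBlocks_mulVec, h]
  funext i
  simp

/-- `ker f0 ∩ ker fbar0 = im finf ∩ im fbarinf`, of dimension `ainf − r1`. -/
theorem stmt2 (d : SplicingDatum) :
    LinearMap.ker d.f0M.mulVecLin ⊓ LinearMap.ker d.fbar0M.mulVecLin =
      LinearMap.range d.finfM.mulVecLin ⊓ LinearMap.range d.fbarinfM.mulVecLin ∧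
    finrank F2 ↥(LinearMap.ker d.f0M.mulVecLin ⊓ LinearMap.ker d.fbar0M.mulVecLin) =
      d.ainf - d.r1 := by
  constructor
  · ext v
    simp only [Submodule.mem_inf, LinearMap.mem_ker, LinearMap.mem_range, Matrix.mulVecLin_apply,
      aux_ker_f0, aux_ker_fbar0, aux_range_finf, aux_range_fbarinf]
  · let e : ↥(LinearMap.ker d.f0M.mulVecLin ⊓ LinearMap.ker d.fbar0M.mulVecLin) ≃ₗ[F2]
        ↥(LinearMap.ker d.B1.mulVecLin) :=
      { toFun := fun v => ⟨v.1 ∘ Sum.inr, by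
          have h := v.2
          simp only [Submodule.mem_inf, LinearMap.mem_ker, Matrix.mulVecLin_apply,
            aux_ker_f0, aux_ker_fbar0] at h
          rw [LinearMap.mem_ker, Matrix.mulVecLin_apply, ← aux_tau1 d v.1 h.1]
          exact h.2⟩
        map_add' := fun _ _ => rfl
        map_smul' := fun _ _ => rfl
        invFun := fun y => ⟨Sum.elim 0 y.1, by
          have h := y.2
          rw [LinearMap.mem_ker, Matrix.mulVecLin_apply] at h
          have h0 : (Sum.elim 0 y.1 : Fin d.a0 ⊕ Fin d.ainf → F2) ∘ Sum.inl = 0 :=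
            Sum.elim_comp_inl _ _
          simp only [Submodule.mem_inf, LinearMap.mem_ker, Matrix.mulVecLin_apply,
            aux_ker_f0, aux_ker_fbar0]
          refine ⟨h0, ?_⟩
          rw [aux_tau1 d _ h0, Sum.elim_comp_inr]
          exact h⟩
        left_inv := fun v => by
          have h := v.2
          simp only [Submodule.mem_inf, LinearMap.mem_ker, Matrix.mulVecLin_apply,
            aux_ker_f0] at h
          apply Subtype.ext
          funext i
          cases i with
          | inl i => exact (congrFun h.1 i).symm
          | inr i => rfl
        right_inv := fun y => by
          apply Subtype.ext
          funext i
          rfl }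
    rw [e.finrank_eq]
    have h := LinearMap.finrank_range_add_finrank_ker d.B1.mulVecLin
    rw [Module.finrank_fin_fun] at h
    have hr : d.r1 = finrank F2 ↥(LinearMap.range d.B1.mulVecLin) := rfl
    omega
end

section
/- Let the notation be as in the context. Then (as integers) l0 − d0 = r1 − rinf, l1 − d1 = rinf − r0, and linf − dinf = r0 − r1. Moreover max{r1 − rinf, 0} ≤ l0 ≤ a0 − rinf, max{rinf − r0, 0} ≤ l1 ≤ a1 − r0, and max{r0 − r1, 0} ≤ linf ≤ ainf − r1 (equivalently, the quantities delta0, delta1, deltainf satisfy 0 ≤ delta0 ≤ a0 − max{r1, rinf}, 0 ≤ delta1 ≤ a1 − max{rinf, r0}, 0 ≤ deltainf ≤ ainf − max{r0, r1}, and delta0 = a0 − r1 − d0, delta1 = a1 − rinf − d1, deltainf = ainf − r0 − dinf). -/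
set_option maxHeartbeats 1600000

open Matrix Module
open scoped Kronecker

theorem aux_key {p q s : ℕ} (A : Matrix (Fin p) (Fin p) F2) (B : Matrix (Fin p) (Fin q) F2)
    (C C' : Matrix (Fin q) (Fin p) F2) (D : Matrix (Fin q) (Fin q) F2)
    (Ai : Matrix (Fin s) (Fin s) F2) (Bi : Matrix (Fin s) (Fin p) F2)
    (Ci Ci' : Matrix (Fin p) (Fin s) F2) (Di : Matrix (Fin p) (Fin p) F2)
    (h1 : Matrix.fromBlocks A B C D * Matrix.fromBlocks A B C' D = 1)
    (h2 : Matrix.fromBlocks Ai Bi Ci' Di * Matrix.fromBlocks Ai Bi Ci Di = 1)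
    (f g : Matrix (Fin s ⊕ Fin p) (Fin p ⊕ Fin q) F2)
    (hf : f = Matrix.fromBlocks 0 0 (1 : Matrix (Fin p) (Fin p) F2) 0)
    (hg : g = Matrix.fromBlocks Ai Bi Ci Di * f * Matrix.fromBlocks A B C D) :
    finrank F2 ↥(LinearMap.ker f.mulVecLin ⊓ LinearMap.ker g.mulVecLin) + B.rank = q ∧
    finrank F2 ↥(LinearMap.range f.mulVecLin ⊔ LinearMap.range g.mulVecLin) = p + Bi.rank ∧
    finrank F2 ↥(LinearMap.ker (f + g).mulVecLin) + Bi.rank ≤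
      finrank F2 ↥(LinearMap.ker f.mulVecLin ⊓ LinearMap.ker g.mulVecLin) + p ∧
    finrank F2 ↥(LinearMap.ker f.mulVecLin ⊓ LinearMap.ker g.mulVecLin) ≤
      finrank F2 ↥(LinearMap.ker (f + g).mulVecLin) ∧
    finrank F2 ↥(LinearMap.range (f + g).mulVecLin) ≤
      finrank F2 ↥(LinearMap.range f.mulVecLin ⊔ LinearMap.range g.mulVecLin) ∧
    finrank F2 ↥(LinearMap.range (f + g).mulVecLin) +
      finrank F2 ↥(LinearMap.ker (f + g).mulVecLin) = p + q := by
  have hfv : ∀ v, f *ᵥ v = Sum.elim (0 : Fin s → F2) (v ∘ Sum.inl) := by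
    intro v; subst hf; rw [Matrix.fromBlocks_mulVec]; simp
  have hgv : ∀ v, g *ᵥ v = Sum.elim (Bi *ᵥ (A *ᵥ (v ∘ Sum.inl) + B *ᵥ (v ∘ Sum.inr)))
      (Di *ᵥ (A *ᵥ (v ∘ Sum.inl) + B *ᵥ (v ∘ Sum.inr))) := by
    intro v
    rw [hg, ← Matrix.mulVec_mulVec, ← Matrix.mulVec_mulVec, hfv, Matrix.fromBlocks_mulVec,
      Matrix.fromBlocks_mulVec]
    simp
  have hinj : ∀ z, Bi *ᵥ z = 0 → Di *ᵥ z = 0 → z = 0 := by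
    intro z hz1 hz2
    have := congrArg (fun M => M *ᵥ (Sum.elim (0 : Fin s → F2) z)) h2
    simp only [← Matrix.mulVec_mulVec] at this
    rw [Matrix.fromBlocks_mulVec Ai Bi Ci Di] at this
    simp only [Sum.elim_comp_inl, Sum.elim_comp_inr, hz1, hz2, Matrix.mulVec_zero, add_zero] at this
    rw [Matrix.one_mulVec] at this
    have h3 := congrArg (fun w => w ∘ Sum.inr) this
    simp only [Sum.elim_comp_inr] at h3
    rw [← h3]
    have : (Sum.elim (0 : Fin s → F2) (0 : Fin p → F2)) = 0 := by ext i; cases i <;> rfl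
    rw [this, Matrix.mulVec_zero]; rfl
  have hsurj : ∀ z, ∃ v : Fin p ⊕ Fin q → F2, A *ᵥ (v ∘ Sum.inl) + B *ᵥ (v ∘ Sum.inr) = z := by
    intro z
    refine ⟨Matrix.fromBlocks A B C' D *ᵥ Sum.elim z 0, ?_⟩
    have := congrArg (fun M => M *ᵥ (Sum.elim z (0 : Fin q → F2))) h1
    simp only [← Matrix.mulVec_mulVec] at this
    rw [Matrix.fromBlocks_mulVec A B C D, Matrix.one_mulVec] at this
    simpa using congrArg (fun w => w ∘ Sum.inl) this
  have hBr : B.rank + finrank F2 ↥(LinearMap.ker B.mulVecLin) = q := by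
    simpa [Matrix.rank] using LinearMap.finrank_range_add_finrank_ker B.mulVecLin
  have hBir : Bi.rank + finrank F2 ↥(LinearMap.ker Bi.mulVecLin) = p := by
    simpa [Matrix.rank] using LinearMap.finrank_range_add_finrank_ker Bi.mulVecLin
  have hKmem : ∀ v, v ∈ LinearMap.ker f.mulVecLin ⊓ LinearMap.ker g.mulVecLin ↔
      v ∘ Sum.inl = 0 ∧ B *ᵥ (v ∘ Sum.inr) = 0 := by
    intro v
    simp only [Submodule.mem_inf, LinearMap.mem_ker, Matrix.mulVecLin_apply, hfv, hgv]
    constructor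
    · rintro ⟨ha, hb⟩
      have ha' : v ∘ Sum.inl = 0 := by simpa using congrArg (fun w => w ∘ Sum.inr) ha
      have hb1 := congrArg (fun w => w ∘ Sum.inl) hb
      have hb2 := congrArg (fun w => w ∘ Sum.inr) hb
      simp only [Sum.elim_comp_inl, Sum.elim_comp_inr] at hb1 hb2
      have := hinj _ hb1 hb2
      rw [ha'] at this
      exact ⟨ha', by simpa using this⟩
    · rintro ⟨ha, hb⟩
      rw [ha, hb]
      simp
  have hlow : LinearMap.ker f.mulVecLin ⊓ LinearMap.ker g.mulVecLin ≤
      LinearMap.ker (f + g).mulVecLin := by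
    intro v hv
    simp only [Submodule.mem_inf, LinearMap.mem_ker, Matrix.mulVecLin_apply] at hv ⊢
    rw [Matrix.add_mulVec, hv.1, hv.2, add_zero]
  refine ⟨?_, ?_, ?_, Submodule.finrank_mono hlow, ?_, ?_⟩
  · have : LinearMap.ker f.mulVecLin ⊓ LinearMap.ker g.mulVecLin =
        (LinearMap.ker B.mulVecLin).map
          ((LinearEquiv.sumArrowLequivProdArrow (Fin p) (Fin q) F2 F2).symm.toLinearMap ∘ₗ
            LinearMap.inr F2 (Fin p → F2) (Fin q → F2)) := by
      ext v
      rw [hKmem, Submodule.mem_map]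
      constructor
      · rintro ⟨ha, hb⟩
        refine ⟨v ∘ Sum.inr, hb, ?_⟩
        ext i
        rcases i with i | i
        · simpa using (congrFun ha i).symm
        · simp
      · rintro ⟨y, hy, rfl⟩
        constructor
        · ext i; simp
        · exact hy
    have hin : Function.Injective
        ((LinearEquiv.sumArrowLequivProdArrow (Fin p) (Fin q) F2 F2).symm.toLinearMap ∘ₗ
            LinearMap.inr F2 (Fin p → F2) (Fin q → F2)) := by
      rw [LinearMap.coe_comp]
      exact (LinearEquiv.injective _).comp LinearMap.inr_injective
    rw [this, ← (Submodule.equivMapOfInjective _ hin _).finrank_eq]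
    omega
  · have : LinearMap.range f.mulVecLin ⊔ LinearMap.range g.mulVecLin =
        ((LinearMap.range Bi.mulVecLin).prod (⊤ : Submodule F2 (Fin p → F2))).map
          (LinearEquiv.sumArrowLequivProdArrow (Fin s) (Fin p) F2 F2).symm.toLinearMap := by
      apply le_antisymm
      · apply sup_le
        · rintro _ ⟨v, rfl⟩
          refine ⟨(0, v ∘ Sum.inl), ⟨Submodule.zero_mem _, trivial⟩, ?_⟩
          rw [Matrix.mulVecLin_apply, hfv]; rfl
        · rintro _ ⟨v, rfl⟩
          rw [Matrix.mulVecLin_apply, hgv]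
          exact ⟨(_, _), ⟨⟨_, rfl⟩, trivial⟩, rfl⟩
      · rintro _ ⟨⟨_, x⟩, ⟨⟨z, rfl⟩, -⟩, rfl⟩
        obtain ⟨v, hv⟩ := hsurj z
        refine Submodule.mem_sup.2 ⟨_, ⟨Sum.elim (x - Di *ᵥ z) 0, rfl⟩, _, ⟨v, rfl⟩, ?_⟩
        rw [Matrix.mulVecLin_apply, Matrix.mulVecLin_apply, hfv, hgv, hv]
        ext i
        rcases i with i | i <;> simp
    rw [this, LinearEquiv.finrank_map_eq]
    let e : ↥((LinearMap.range Bi.mulVecLin).prod (⊤ : Submodule F2 (Fin p → F2))) ≃ₗ[F2]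
        ↥(LinearMap.range Bi.mulVecLin) × (Fin p → F2) :=
      { toFun := fun x => (⟨x.1.1, x.2.1⟩, x.1.2)
        invFun := fun y => ⟨(y.1.1, y.2), ⟨y.1.2, trivial⟩⟩
        map_add' := fun _ _ => rfl
        map_smul' := fun _ _ => rfl
        left_inv := fun _ => rfl
        right_inv := fun _ => rfl }
    rw [e.finrank_eq, Module.finrank_prod]
    simp [Matrix.rank, add_comm]
  · let φ : (Fin p ⊕ Fin q → F2) →ₗ[F2] (Fin p → F2) := (Matrix.fromCols A B).mulVecLin
    have hφ : ∀ v, φ v = A *ᵥ (v ∘ Sum.inl) + B *ᵥ (v ∘ Sum.inr) := by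
      intro v; exact Matrix.fromCols_mulVec A B v
    have hk : ∀ v ∈ LinearMap.ker (f + g).mulVecLin, φ v ∈ LinearMap.ker Bi.mulVecLin ∧
        v ∘ Sum.inl + Di *ᵥ (φ v) = 0 := by
      intro v hv
      rw [LinearMap.mem_ker, Matrix.mulVecLin_apply, Matrix.add_mulVec, hfv, hgv, ← hφ] at hv
      constructor
      · rw [LinearMap.mem_ker, Matrix.mulVecLin_apply]
        ext i; simpa using congrFun hv (Sum.inl i)
      · ext i; simpa using congrFun hv (Sum.inr i)
    have hrn := LinearMap.finrank_range_add_finrank_ker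
      (φ.domRestrict (LinearMap.ker (f + g).mulVecLin))
    have e1 : finrank F2 ↥(LinearMap.range (φ.domRestrict (LinearMap.ker (f + g).mulVecLin))) ≤
        finrank F2 ↥(LinearMap.ker Bi.mulVecLin) := by
      apply Submodule.finrank_mono
      rintro _ ⟨v, rfl⟩
      exact (hk v.1 v.2).1
    have e2 : finrank F2 ↥(LinearMap.ker (φ.domRestrict (LinearMap.ker (f + g).mulVecLin))) ≤
        finrank F2 ↥(LinearMap.ker f.mulVecLin ⊓ LinearMap.ker g.mulVecLin) := by
      rw [(Submodule.equivMapOfInjective (Submodule.subtype _) (Submodule.injective_subtype _)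
        (LinearMap.ker (φ.domRestrict (LinearMap.ker (f + g).mulVecLin)))).finrank_eq]
      apply Submodule.finrank_mono
      rintro _ ⟨v, hv, rfl⟩
      have hv' : φ v.1 = 0 := hv
      have h3 := (hk v.1 v.2).2
      rw [hv', Matrix.mulVec_zero, add_zero] at h3
      refine (hKmem _).2 ⟨h3, ?_⟩
      rw [hφ, h3, Matrix.mulVec_zero, zero_add] at hv'
      exact hv'
    omega
  · apply Submodule.finrank_mono
    rintro _ ⟨v, rfl⟩
    rw [Matrix.mulVecLin_apply, Matrix.add_mulVec]
    exact Submodule.add_mem_sup ⟨v, rfl⟩ ⟨v, rfl⟩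
  · simpa using LinearMap.finrank_range_add_finrank_ker (f + g).mulVecLin

/-- relations and bounds between `l•`, `d•`, `r•` and `delta•`. -/
theorem stmt3 (d : SplicingDatum) :
    ((d.l0 : ℤ) - (d.dd0 : ℤ) = (d.r1 : ℤ) - (d.rinf : ℤ)) ∧
    ((d.l1 : ℤ) - (d.dd1 : ℤ) = (d.rinf : ℤ) - (d.r0 : ℤ)) ∧
    ((d.linf : ℤ) - (d.ddinf : ℤ) = (d.r0 : ℤ) - (d.r1 : ℤ)) ∧
    (max ((d.r1 : ℤ) - (d.rinf : ℤ)) 0 ≤ (d.l0 : ℤ) ∧ (d.l0 : ℤ) ≤ (d.a0 : ℤ) - (d.rinf : ℤ)) ∧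
    (max ((d.rinf : ℤ) - (d.r0 : ℤ)) 0 ≤ (d.l1 : ℤ) ∧ (d.l1 : ℤ) ≤ (d.a1 : ℤ) - (d.r0 : ℤ)) ∧
    (max ((d.r0 : ℤ) - (d.r1 : ℤ)) 0 ≤ (d.linf : ℤ) ∧ (d.linf : ℤ) ≤ (d.ainf : ℤ) - (d.r1 : ℤ)) ∧
    (0 ≤ (d.delta0 : ℤ) ∧ (d.delta0 : ℤ) ≤ (d.a0 : ℤ) - ((max d.r1 d.rinf : ℕ) : ℤ) ∧
      (d.delta0 : ℤ) = (d.a0 : ℤ) - (d.r1 : ℤ) - (d.dd0 : ℤ)) ∧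
    (0 ≤ (d.delta1 : ℤ) ∧ (d.delta1 : ℤ) ≤ (d.a1 : ℤ) - ((max d.rinf d.r0 : ℕ) : ℤ) ∧
      (d.delta1 : ℤ) = (d.a1 : ℤ) - (d.rinf : ℤ) - (d.dd1 : ℤ)) ∧
    (0 ≤ (d.deltainf : ℤ) ∧ (d.deltainf : ℤ) ≤ (d.ainf : ℤ) - ((max d.r0 d.r1 : ℕ) : ℤ) ∧
      (d.deltainf : ℤ) = (d.ainf : ℤ) - (d.r0 : ℤ) - (d.ddinf : ℤ)) := by
  obtain ⟨x1, x2, x3, x4, x5, x6⟩ := aux_key d.A1 d.B1 d.C1 d.C1inv d.D1 d.Ainf d.Binf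
    d.Cinfinv d.Cinf d.Dinf d.inv1_left d.invinf_left d.f0M d.fbar0M rfl rfl
  obtain ⟨y1, y2, y3, y4, y5, y6⟩ := aux_key d.Ainf d.Binf d.Cinf d.Cinfinv d.Dinf d.A0 d.B0
    d.C0inv d.C0 d.D0 d.invinf_left d.inv0_left d.f1M d.fbar1M rfl rfl
  obtain ⟨z1, z2, z3, z4, z5, z6⟩ := aux_key d.A0 d.B0 d.C0 d.C0inv d.D0 d.A1 d.B1
    d.C1inv d.C1 d.D1 d.inv0_left d.inv1_left d.finfM d.fbarinfM rfl rfl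
  simp only [SplicingDatum.delta0, SplicingDatum.delta1, SplicingDatum.deltainf,
    SplicingDatum.l0, SplicingDatum.l1, SplicingDatum.linf, SplicingDatum.dd0,
    SplicingDatum.dd1, SplicingDatum.ddinf, SplicingDatum.r0, SplicingDatum.r1,
    SplicingDatum.rinf, SplicingDatum.k0, SplicingDatum.k1, SplicingDatum.kinf]
  refine ⟨?_, ?_, ?_, ⟨?_, ?_⟩, ⟨?_, ?_⟩, ⟨?_, ?_⟩, ⟨?_, ?_, ?_⟩, ⟨?_, ?_, ?_⟩, ⟨?_, ?_, ?_⟩⟩ <;>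
    omega
end
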